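/- (Theorem 6: irreversibility of qutrit magic-state manipulation) Suppose D > 0 and C > 0 are achievable rates under free maps: there exist free linear maps Γ_n from n-qutrit to ⌊Dn⌋-qutrit self-adjoint operators with (1/2)‖Γ_n(|H₊⟩⟨H₊|^{⊗n}) − |N⟩⟨N|^{⊗⌊Dn⌋}‖₁ → 0, and free linear maps Λ_n from n-qutrit to ⌊Cn⌋-qutrit self-adjoint operators with (1/2)‖Λ_n(|N⟩⟨N|^{⊗n}) − |H₊⟩⟨H₊|^{⊗⌊Cn⌋}‖₁ → 0. Then D ≤ log₂(3−√3)/log₂(3/2), C ≤ (1/2)·log₂(11/3)/log₂((1+2√3)/3), and consequently D · C ≤ [log₂(11/3) · log₂(3−√3)]/[log₂(9/4) · log₂((1+2√3)/3)] < 1. In particular, the resource theory of qutrit magic is asymptotically irreversible: no pair of free conversion protocols can interconvert |H₊⟩ and |N⟩ at rates whose product reaches 1. -/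

import Mathlib

/-!
Both bounds compare the images of the free maps with tensor-power witnesses. Since the
phase-space point operators span all operators, a real symmetric `Y` with `|Tr (A_u Y)| ≤ c` for all
`u` satisfies `|Tr (Y^{⊗m} σ)| ≤ c^m Tr σ` for every positive `σ` with nonnegative Wigner function
(`witness`).

* `H₊ → N` (`overlap_N`). The even mixture `σ` of the stabilizer states `|0⟩` and
  `(|0⟩ + |1⟩ + |2⟩)/√3` is free and `|H₊⟩⟨H₊| ≤ (3 - √3) σ`, so by positivity the image of `H₊^{⊗n}`
  is at most `(3 - √3)^n` times a free state. Its overlap with `N^{⊗m}` is at most `(2/3)^m`: with the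
  strange state `S`, the operator `Y = N + S/3 ≥ N` has `|Tr (A_u Y)| ≤ 2/3`. An overlap bounded away
  from zero forces `D log (3/2) ≤ log (3 - √3)`.
* `N → H₊` (`overlap_H`). The state `N ⊗ N` is a difference of positive operators with nonnegative
  Wigner function and traces `7/3` and `4/3`; hence `N^{⊗2k}` is such a difference with total trace
  `(11/3)^k` (`robust`), and free maps preserve this. The witness `Q` proportional to the sign of
  the Wigner function of `H₊` has `Tr (Q H₊) = 1`, `-1 ≤ Q ≤ 1` and `|Tr (A_u Q)| ≤ 3/(1 + 2√3)`, so
  `Q^{⊗m}` detects `H₊^{⊗m}` and forces `2 C log ((1 + 2√3)/3) ≤ log (11/3)`.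

The passage from these estimates to rates is `rate_bound`; trace-norm convergence enters through
Hölder's inequality `hip_le_trNorm`. The last inequality is `numeric`.
-/

open scoped ComplexOrder
open Filter

noncomputable section

/-- The real vector space of self-adjoint (Hermitian) operators on `ℂ^ι`. -/
abbrev HMat (ι : Type) [Fintype ι] [DecidableEq ι] : Type :=
  selfAdjoint (Matrix ι ι ℂ)

variable {ι κ : Type} [Fintype ι] [DecidableEq ι] [Fintype κ] [DecidableEq κ]

/-- The matrix underlying a self-adjoint operator is Hermitian. -/
def herm (X : HMat ι) : X.1.IsHermitian := X.2

/-- The (real) Hilbert–Schmidt inner product `⟨Q, X⟩ = Tr (Q X)`. -/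
def hip (Q X : HMat ι) : ℝ := (Matrix.trace (Q.1 * X.1)).re

/-- The trace norm of a self-adjoint operator: the sum of absolute values of eigenvalues. -/
def trNorm (X : HMat ι) : ℝ := ∑ i, |(herm X).eigenvalues i|

/-- The operator norm of a self-adjoint operator: the largest absolute value of an eigenvalue. -/
def opNorm (X : HMat ι) : ℝ := ⨆ i, |(herm X).eigenvalues i|

/-- A state: a positive semidefinite operator of unit trace. -/
def IsState (ρ : HMat ι) : Prop := ρ.1.PosSemidef ∧ Matrix.trace ρ.1 = 1

/-- A pure state: a rank-one orthogonal projection. -/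
def IsPureState (φ : HMat ι) : Prop := IsState φ ∧ φ.1 * φ.1 = φ.1

/-- A norm-like function on self-adjoint operators. -/
structure MatNorm (ι : Type) [Fintype ι] [DecidableEq ι] where
  toFun : HMat ι → ℝ
  eq_zero' : ∀ X, toFun X = 0 → X = 0
  smul' : ∀ (t : ℝ) (X), toFun (t • X) = |t| * toFun X
  add_le' : ∀ X Y, toFun (X + Y) ≤ toFun X + toFun Y

/-- A resource norm: a norm with `‖ρ‖ ≥ 1` on every state. -/
structure ResourceNorm (ι : Type) [Fintype ι] [DecidableEq ι] extends MatNorm ι where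
  one_le_state' : ∀ ρ, IsState ρ → 1 ≤ toFun ρ

/-- The dual norm `‖Q‖° = sup {⟨Q, X⟩ : ‖X‖ ≤ 1}`. -/
def dualNormF (ν : HMat ι → ℝ) (Q : HMat ι) : ℝ :=
  sSup {r | ∃ X, ν X ≤ 1 ∧ r = hip Q X}

/-- Membership in the class `O_μ` of maps contracting the trace norm and the resource norms. -/
def MemO (νi : ResourceNorm ι) (νo : ResourceNorm κ) (Λ : HMat ι →ₗ[ℝ] HMat κ) : Prop :=
  (∀ X, trNorm (Λ X) ≤ trNorm X) ∧ (∀ X, νo.toFun (Λ X) ≤ νi.toFun X)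

/-- The trace-norm ε-ball around a state. -/
def ball (ρ : HMat ι) (ε : ℝ) : Set (HMat ι) :=
  {X | trNorm X ≤ 1 ∧ trNorm (X - ρ) ≤ ε}

/-- Loewner order: `A ≤ B` iff `B - A` is positive semidefinite. -/
def loew (A B : Matrix ι ι ℂ) : Prop := (B - A).PosSemidef

/-- The feasible values `⟨Q, Z⟩` entering the emancipated hypothesis testing quantity. -/
def dhSet (ρ Z : HMat ι) (ε : ℝ) : Set ℝ :=
  {r | ∃ Q : HMat ι, loew (-(1 : Matrix ι ι ℂ)) Q.1 ∧ loew Q.1 1 ∧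
        1 - ε ≤ hip Q ρ ∧ r = hip Q Z}

/-- The non-logarithmic emancipated hypothesis testing quantity `d_ħ^ε(ρ‖Z)`,
with value `+∞` when the infimum is `≤ 0`. -/
def dEmanc (ρ Z : HMat ι) (ε : ℝ) : EReal :=
  if 0 < sInf (dhSet ρ Z ε) then (((sInf (dhSet ρ Z ε))⁻¹ : ℝ) : EReal) else ⊤

/-- The emancipated hypothesis testing relative entropy `D_ħ^ε(ρ‖Z)` (base-2 logarithmic form),
with value `+∞` when the infimum is `≤ 0`. -/
def DEmanc (ρ Z : HMat ι) (ε : ℝ) : EReal :=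
  if 0 < sInf (dhSet ρ Z ε) then ((-Real.logb 2 (sInf (dhSet ρ Z ε)) : ℝ) : EReal) else ⊤


/-- The `n`-fold tensor (Kronecker) power of a self-adjoint operator. -/
def tpow {d : ℕ} (A : HMat (Fin d)) (n : ℕ) : HMat (Fin n → Fin d) :=
  ⟨Matrix.of fun i j => ∏ k, A.1 (i k) (j k), by
    refine Matrix.IsHermitian.isSelfAdjoint ?_
    refine Matrix.IsHermitian.ext fun i j => ?_
    simp only [Matrix.of_apply]
    rw [star_prod]
    exact Finset.prod_congr rfl fun k _ => (herm A).apply (i k) (j k)⟩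

/-- Combining operators on `m` and `n` copies into one on `m + n` copies (tensor product). -/
def kron {d m n : ℕ} (Y : HMat (Fin m → Fin d)) (Z : HMat (Fin n → Fin d)) :
    HMat (Fin (m + n) → Fin d) :=
  ⟨Matrix.of fun i j =>
      Y.1 (fun k => i (Fin.castAdd n k)) (fun k => j (Fin.castAdd n k)) *
        Z.1 (fun k => i (Fin.natAdd m k)) (fun k => j (Fin.natAdd m k)), by
    refine Matrix.IsHermitian.isSelfAdjoint ?_
    refine Matrix.IsHermitian.ext fun i j => ?_
    simp only [Matrix.of_apply, star_mul']
    rw [(herm Y).apply, (herm Z).apply]⟩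
/-- The rank-one operator `|v⟩⟨v|`. -/
def rankOne {ι : Type} [Fintype ι] [DecidableEq ι] (v : ι → ℂ) : HMat ι :=
  ⟨Matrix.vecMulVec v (star v), by
    refine Matrix.IsHermitian.isSelfAdjoint ?_
    refine Matrix.IsHermitian.ext fun i j => ?_
    simp [Matrix.vecMulVec_apply, mul_comm]⟩

/-- The primitive third root of unity `ω = e^{2πi/3}`. -/
def w3 : ℂ := Complex.exp (2 * Real.pi * Complex.I / 3)

/-- The qutrit shift operator `X|j⟩ = |j+1 mod 3⟩`. -/
def shiftX : Matrix (Fin 3) (Fin 3) ℂ := Matrix.of fun i j => if i = j + 1 then 1 else 0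

/-- The qutrit clock operator `Z|j⟩ = ω^j |j⟩`. -/
def clockZ : Matrix (Fin 3) (Fin 3) ℂ := Matrix.of fun i j => if i = j then w3 ^ (j : ℕ) else 0

/-- The Heisenberg–Weyl operators `T_{(a₁,a₂)} = ω^{−2a₁a₂} Z^{a₁} X^{a₂}`. -/
def Tw (a : Fin 3 × Fin 3) : Matrix (Fin 3) (Fin 3) ℂ :=
  w3 ^ (-2 * (a.1 : ℤ) * (a.2 : ℤ)) • (clockZ ^ (a.1 : ℕ) * shiftX ^ (a.2 : ℕ))

/-- The phase-space point operator `A_{(0,0)}`. -/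
def A00 : Matrix (Fin 3) (Fin 3) ℂ := (3 : ℂ)⁻¹ • ∑ a : Fin 3 × Fin 3, Tw a

/-- The phase-space point operators `A_u = T_u A_{(0,0)} T_u†`. -/
def Aw (a : Fin 3 × Fin 3) : Matrix (Fin 3) (Fin 3) ℂ := Tw a * A00 * (Tw a).conjTranspose

/-- The `n`-qutrit phase-space point operators `A_{u₁⊕⋯⊕u_n}`. -/
def AwN {n : ℕ} (u : Fin n → Fin 3 × Fin 3) :
    Matrix (Fin n → Fin 3) (Fin n → Fin 3) ℂ :=
  Matrix.of fun i j => ∏ k, Aw (u k) (i k) (j k)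

/-- The discrete Wigner function `W_u(Y) = 3^{−n} ⟨A_u, Y⟩`. -/
def wig {n : ℕ} (u : Fin n → Fin 3 × Fin 3)
    (Y : Matrix (Fin n → Fin 3) (Fin n → Fin 3) ℂ) : ℂ :=
  ((3 : ℂ) ^ n)⁻¹ * Matrix.trace ((AwN u).conjTranspose * Y)

/-- The set `F_W` of `n`-qutrit states with nonnegative Wigner function. -/
def FW (n : ℕ) : Set (Matrix (Fin n → Fin 3) (Fin n → Fin 3) ℂ) :=
  {ρ | ρ.PosSemidef ∧ Matrix.trace ρ = 1 ∧ ∀ u : Fin n → Fin 3 × Fin 3, 0 ≤ wig u ρ}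

/-- A free map: positive, trace preserving, and preserving `F_W`. -/
def IsFreeMap {n m : ℕ}
    (Λ : HMat (Fin n → Fin 3) →ₗ[ℝ] HMat (Fin m → Fin 3)) : Prop :=
  (∀ X : HMat (Fin n → Fin 3), X.1.PosSemidef → ((Λ X).1).PosSemidef) ∧
  (∀ X : HMat (Fin n → Fin 3), Matrix.trace ((Λ X).1) = Matrix.trace X.1) ∧
  (∀ X : HMat (Fin n → Fin 3), X.1 ∈ FW n → ((Λ X).1) ∈ FW m)

/-- The Norrell state vector `|N⟩ = (−|0⟩ + 2|1⟩ − |2⟩)/√6`. -/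
def vN : Fin 3 → ℂ := fun j => (![(-1 : ℂ), 2, -1] j) / (Real.sqrt 6 : ℂ)

/-- The Norrell state `|N⟩⟨N|`. -/
def rhoN : HMat (Fin 3) := rankOne vN

/-- The qutrit Hadamard matrix `H_{jk} = ω^{jk}/√3`. -/
def Hq : Matrix (Fin 3) (Fin 3) ℂ :=
  Matrix.of fun j k => w3 ^ ((j : ℕ) * (k : ℕ)) / (Real.sqrt 3 : ℂ)

/-! ### Elementary tensors and their positivity -/

/-- The elementary tensor `f₀ ⊗ ⋯ ⊗ f_{n-1}` of qutrit operators. -/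
def kp {n : ℕ} (f : Fin n → Matrix (Fin 3) (Fin 3) ℂ) :
    Matrix (Fin n → Fin 3) (Fin n → Fin 3) ℂ :=
  Matrix.of fun i j => ∏ k, f k (i k) (j k)

lemma kp_apply {n : ℕ} (f : Fin n → Matrix (Fin 3) (Fin 3) ℂ) (i j : Fin n → Fin 3) :
    kp f i j = ∏ k, f k (i k) (j k) := rfl

lemma kp_mul {n : ℕ} (f g : Fin n → Matrix (Fin 3) (Fin 3) ℂ) :
    kp f * kp g = kp fun k => f k * g k := by
  ext i j
  simp only [Matrix.mul_apply, kp_apply, ← Finset.prod_mul_distrib]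
  rw [Finset.prod_univ_sum, Fintype.piFinset_univ]

lemma kp_conjTranspose {n : ℕ} (f : Fin n → Matrix (Fin 3) (Fin 3) ℂ) :
    (kp f).conjTranspose = kp fun k => (f k).conjTranspose := by
  ext i j
  simp [Matrix.conjTranspose_apply, kp_apply]

lemma kp_trace {n : ℕ} (f : Fin n → Matrix (Fin 3) (Fin 3) ℂ) :
    Matrix.trace (kp f) = ∏ k, Matrix.trace (f k) := by
  simp only [Matrix.trace, Matrix.diag, kp_apply]
  rw [Finset.prod_univ_sum, Fintype.piFinset_univ]

lemma kp_one {n : ℕ} : kp (fun _ : Fin n => (1 : Matrix (Fin 3) (Fin 3) ℂ)) = 1 := by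
  ext i j
  by_cases h : i = j
  · subst h; simp [kp_apply]
  · obtain ⟨k, hk⟩ := Function.ne_iff.mp h
    rw [kp_apply, Matrix.one_apply_ne h]
    exact Finset.prod_eq_zero (Finset.mem_univ k) (Matrix.one_apply_ne hk)

lemma kp_sum {n : ℕ} {α : Type} [Fintype α]
    (F : Fin n → α → Matrix (Fin 3) (Fin 3) ℂ) :
    kp (fun k => ∑ a, F k a) = ∑ p : Fin n → α, kp fun k => F k (p k) := by
  classical
  ext i j
  simp only [kp_apply, Matrix.sum_apply]
  rw [Finset.prod_univ_sum, Fintype.piFinset_univ]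

lemma kp_smul {n : ℕ} (c : Fin n → ℝ) (f : Fin n → Matrix (Fin 3) (Fin 3) ℂ) :
    kp (fun k => c k • f k) = (∏ k, c k) • kp f := by
  ext i j
  simp [kp_apply, Finset.prod_mul_distrib]

lemma kp_psd {n : ℕ} {f : Fin n → Matrix (Fin 3) (Fin 3) ℂ} (h : ∀ k, (f k).PosSemidef) :
    (kp f).PosSemidef := by
  have h2 : ∀ k, ∃ B : Matrix (Fin 3) (Fin 3) ℂ, f k = B.conjTranspose * B := fun k => by
    open scoped MatrixOrder in
    exact CStarAlgebra.nonneg_iff_eq_star_mul_self.mp (h k).nonneg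
  choose B hB using h2
  have : kp f = (kp B).conjTranspose * kp B := by
    rw [kp_conjTranspose, kp_mul]
    exact congrArg kp (funext hB)
  rw [this]
  exact Matrix.posSemidef_conjTranspose_mul_self _

/-- Monotonicity of tensor powers on the positive cone: expand `(A + (B - A))^{⊗n}`; every term is
positive semidefinite, and one of them is `A^{⊗n}`. -/
lemma kp_mono {n : ℕ} {A B : Matrix (Fin 3) (Fin 3) ℂ} (hA : A.PosSemidef)
    (hBA : (B - A).PosSemidef) :
    (kp (fun _ : Fin n => B) - kp (fun _ : Fin n => A)).PosSemidef := by
  have e : B = ∑ b : Bool, (if b then A else B - A) := by simp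
  have : kp (fun _ : Fin n => B) =
      ∑ p : Fin n → Bool, kp fun k => (if p k then A else B - A) := by
    rw [← kp_sum (fun (_ : Fin n) (b : Bool) => if b then A else B - A), ← e]
  rw [this, ← Finset.add_sum_erase _ _ (Finset.mem_univ (fun _ : Fin n => true))]
  simp only [if_true, add_sub_cancel_left]
  refine Matrix.posSemidef_sum _ fun p _ => kp_psd fun k => ?_
  split_ifs
  · exact hA
  · exact hBA

/-- Tensor powers of `-1 ≤ Q ≤ 1` satisfy `-1 ≤ s Q^{⊗n} ≤ 1`, `s = ±1`: with `E_± = (1 ± Q)/2`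
one has `Q = E_+ - E_-` and `1 = E_+ + E_-`, so `1 - s Q^{⊗n}` is a nonnegative combination of
tensor products of `E_±`. -/
lemma kp_contr {n : ℕ} {Q : Matrix (Fin 3) (Fin 3) ℂ} (h1 : (1 - Q).PosSemidef)
    (h2 : (1 + Q).PosSemidef) (s : ℝ) (hs : |s| = 1) :
    (1 - s • kp (fun _ : Fin n => Q)).PosSemidef := by
  set E : Bool → Matrix (Fin 3) (Fin 3) ℂ := fun b =>
    if b then (1 / 2 : ℝ) • (1 + Q) else (1 / 2 : ℝ) • (1 - Q) with hE
  set c : Bool → ℝ := fun b => if b then 1 else -1 with hc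
  have hEpsd : ∀ b, (E b).PosSemidef := by
    intro b
    cases b
    · exact h1.smul (by norm_num : (0 : ℝ) ≤ 1 / 2)
    · exact h2.smul (by norm_num : (0 : ℝ) ≤ 1 / 2)
  have e1 : (1 : Matrix (Fin 3) (Fin 3) ℂ) = ∑ b, E b := by
    simp only [hE, Fintype.sum_bool, if_true]
    simp only [Bool.false_eq_true, if_false]
    module
  have eQ : Q = ∑ b, c b • E b := by
    simp only [hE, hc, Fintype.sum_bool, if_true]
    simp only [Bool.false_eq_true, if_false]
    module
  have k1 : (1 : Matrix (Fin n → Fin 3) (Fin n → Fin 3) ℂ) =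
      ∑ p : Fin n → Bool, kp fun k => E (p k) := by
    rw [← kp_sum (fun (_ : Fin n) b => E b), ← e1, kp_one]
  have kQ : kp (fun _ : Fin n => Q) =
      ∑ p : Fin n → Bool, (∏ k, c (p k)) • kp fun k => E (p k) := by
    conv_lhs => rw [eQ]
    rw [kp_sum (fun (_ : Fin n) b => c b • E b)]
    exact Finset.sum_congr rfl fun p _ => kp_smul _ _
  have : (1 - s • kp (fun _ : Fin n => Q)) =
      ∑ p : Fin n → Bool, (1 - s * ∏ k, c (p k)) • kp fun k => E (p k) := by
    rw [kQ, Finset.smul_sum]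
    conv_lhs => rw [k1]
    rw [← Finset.sum_sub_distrib]
    refine Finset.sum_congr rfl fun p _ => ?_
    rw [sub_smul, one_smul, mul_smul]
  rw [this]
  refine Matrix.posSemidef_sum _ fun p _ => (kp_psd fun k => hEpsd _).smul ?_
  have habs : |s * ∏ k, c (p k)| = 1 := by
    rw [abs_mul, hs, one_mul, Finset.abs_prod]
    refine Finset.prod_eq_one fun k _ => ?_
    simp only [hc]
    split_ifs <;> simp
  have := le_abs_self (s * ∏ k, c (p k))
  linarith

/-! ### Trace pairings and the trace norm -/

lemma trace_mul_nonneg {ι : Type} [Fintype ι] [DecidableEq ι] {A B : Matrix ι ι ℂ}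
    (hA : A.PosSemidef) (hB : B.PosSemidef) : 0 ≤ (Matrix.trace (A * B)).re := by
  obtain ⟨a, ha⟩ : ∃ a : Matrix ι ι ℂ, A = a.conjTranspose * a := by
    open scoped MatrixOrder in
    exact CStarAlgebra.nonneg_iff_eq_star_mul_self.mp hA.nonneg
  rw [ha, Matrix.mul_assoc, Matrix.trace_mul_comm]
  exact (Complex.le_def.mp (hB.mul_mul_conjTranspose_same a).trace_nonneg).1

/-- Hölder's inequality for the trace norm: `|Tr (Q X)| ≤ ‖X‖₁` if `-1 ≤ Q ≤ 1`. -/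
lemma hip_le_trNorm {ι : Type} [Fintype ι] [DecidableEq ι] (Q X : HMat ι)
    (h1 : (1 - Q.1).PosSemidef) (h2 : (1 + Q.1).PosSemidef) : |hip Q X| ≤ trNorm X := by
  set U : Matrix ι ι ℂ := ((herm X).eigenvectorUnitary : Matrix ι ι ℂ) with hU
  have hUU : star U * U = 1 := Unitary.coe_star_mul_self (herm X).eigenvectorUnitary
  set R : Matrix ι ι ℂ := star U * Q.1 * U with hR
  have hX : X.1 = U * Matrix.diagonal (RCLike.ofReal ∘ (herm X).eigenvalues) * star U := by
    have := (herm X).spectral_theorem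
    rwa [Unitary.conjStarAlgAut_apply] at this
  have htr : hip Q X = ∑ i, (R i i).re * (herm X).eigenvalues i := by
    unfold hip
    conv_lhs => rw [hX]
    rw [← Matrix.mul_assoc, Matrix.trace_mul_comm, ← Matrix.mul_assoc, ← Matrix.mul_assoc,
      ← hR, Matrix.trace]
    simp [Matrix.mul_diagonal]
  have b1 : (1 - R).PosSemidef := by
    have := h1.conjTranspose_mul_mul_same U
    rwa [Matrix.mul_sub, Matrix.sub_mul, Matrix.mul_one, ← Matrix.star_eq_conjTranspose, hUU]
      at this
  have b2 : (1 + R).PosSemidef := by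
    have := h2.conjTranspose_mul_mul_same U
    rwa [Matrix.mul_add, Matrix.add_mul, Matrix.mul_one, ← Matrix.star_eq_conjTranspose, hUU]
      at this
  rw [htr]
  refine (Finset.abs_sum_le_sum_abs _ _).trans (Finset.sum_le_sum fun i _ => ?_)
  rw [abs_mul]
  have c1 := (Complex.le_def.mp (b1.diag_nonneg (i := i))).1
  have c2 := (Complex.le_def.mp (b2.diag_nonneg (i := i))).1
  simp at c1 c2
  have : |(R i i).re| ≤ 1 := abs_le.mpr ⟨by linarith, by linarith⟩
  exact mul_le_of_le_one_left (abs_nonneg _) this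

/-! ### Matrix entries of the phase-space point operators -/

lemma w3_sq : w3 ^ 2 = -1 - w3 := by
  have h3 : w3 ^ 3 = 1 := by
    rw [w3, ← Complex.exp_nat_mul, ← Complex.exp_two_pi_mul_I]
    congr 1; push_cast; ring
  have hne : w3 - 1 ≠ 0 := by
    have hp : IsPrimitiveRoot w3 3 := by
      have := Complex.isPrimitiveRoot_exp 3 (by norm_num)
      simpa [w3] using this
    exact sub_ne_zero.mpr (hp.ne_one (by norm_num))
  have : (w3 - 1) * (w3 ^ 2 + w3 + 1) = 0 := by linear_combination h3
  have := (mul_eq_zero.mp this).resolve_left hne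
  linear_combination this

lemma w3_cube : w3 ^ 3 = 1 := by linear_combination (w3 - 1) * w3_sq

lemma w3_ne : w3 ≠ 0 := Complex.exp_ne_zero _

lemma w3_star : (starRingEnd ℂ) w3 = -1 - w3 := by
  have hn : (starRingEnd ℂ) w3 * w3 = 1 := by
    rw [mul_comm, Complex.mul_conj, Complex.normSq_eq_norm_sq]
    have : ‖w3‖ = 1 := by
      rw [w3, Complex.norm_exp]; simp
    simp [this]
  have h2 : (-1 - w3) * w3 = 1 := by linear_combination (-1) * w3_sq
  exact mul_right_cancel₀ w3_ne (hn.trans h2.symm)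

/-- `ω^k` for `k` modulo 3. -/
def wp : Fin 3 → ℂ := ![1, w3, -1 - w3]

lemma wp_add (a b : Fin 3) : wp (a + b) = wp a * wp b := by
  have := w3_sq
  fin_cases a <;> fin_cases b <;> simp [wp] <;> grind

lemma wp_star (a : Fin 3) : (starRingEnd ℂ) (wp a) = wp (-a) := by
  fin_cases a <;> simp [wp, w3_star]

lemma clockZ_pow (a : Fin 3) :
    clockZ ^ (a : ℕ) = Matrix.of fun i j => if i = j then wp (a * i) else 0 := by
  have h := w3_sq
  ext i j
  fin_cases a <;> fin_cases i <;> fin_cases j <;>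
    simp [clockZ, pow_two, Matrix.mul_apply, wp] <;> grind

lemma shiftX_pow (a : Fin 3) :
    shiftX ^ (a : ℕ) = Matrix.of fun i j => if i = j + a then 1 else 0 := by
  ext i j
  fin_cases a <;> fin_cases i <;> fin_cases j <;>
    simp [shiftX, pow_two, Matrix.mul_apply]

lemma w3_zpow (a b : Fin 3) : w3 ^ (-2 * (a : ℤ) * (b : ℤ)) = wp (a * b) := by
  have h := w3_sq
  have h3 := w3_cube
  have key : ∀ k : ℕ, w3 ^ (3 * k) = 1 := fun k => by rw [pow_mul, h3, one_pow]
  have e : w3 ^ (-2 * (a : ℤ) * (b : ℤ)) = w3 ^ ((a : ℕ) * (b : ℕ)) := by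
    have : w3 ^ (-2 * (a : ℤ) * (b : ℤ)) * w3 ^ (3 * ((a : ℕ) * (b : ℕ))) =
        w3 ^ ((a : ℕ) * (b : ℕ)) := by
      rw [← zpow_natCast, ← zpow_natCast, ← zpow_add₀ w3_ne]
      congr 1; push_cast; ring
    rwa [key, mul_one] at this
  rw [e]
  fin_cases a <;> fin_cases b <;> simp [wp] <;> grind

lemma Tw_apply (a : Fin 3 × Fin 3) (i j : Fin 3) :
    Tw a i j = if i = j + a.2 then wp (a.1 * a.2 + a.1 * i) else 0 := by
  rw [Tw, w3_zpow, clockZ_pow, shiftX_pow, Matrix.smul_apply, Matrix.mul_apply]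
  simp [wp_add]

lemma wp_zero : wp 0 = 1 := rfl

lemma A00_apply (i j : Fin 3) : A00 i j = if i + j = 0 then 1 else 0 := by
  rw [A00, Matrix.smul_apply, Matrix.sum_apply, Fintype.sum_prod_type]
  simp only [Tw_apply, Fin.sum_univ_three]
  fin_cases i <;> fin_cases j <;> simp [wp] <;> grind

/-- The phase-space point operator `A_{(p,q)}` is the reflection `|j⟩ ↦ |2q - j⟩` with phases. -/
lemma Aw_apply (a : Fin 3 × Fin 3) (i j : Fin 3) :
    Aw a i j = if i + j = 2 * a.2 then wp (a.1 * (i - j)) else 0 := by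
  obtain ⟨p, q⟩ := a
  have e : Aw (p, q) i j = ∑ k, ∑ l, Tw (p, q) i l * A00 l k * (starRingEnd ℂ) (Tw (p, q) j k) := by
    simp [Aw, Matrix.mul_apply, Finset.sum_mul]
  rw [e]
  simp only [Tw_apply, A00_apply, Fin.sum_univ_three, apply_ite (starRingEnd ℂ), map_zero, wp_star]
  fin_cases q <;> fin_cases i <;> fin_cases j <;> simp [← wp_add] <;>
    fin_cases p <;> rfl

/-! ### Wigner functions of real symmetric operators -/

/-- A real matrix viewed as a complex one. -/
def cm (M : Matrix (Fin 3) (Fin 3) ℝ) : Matrix (Fin 3) (Fin 3) ℂ := M.map (fun x => (x : ℂ))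

lemma cm_apply (M : Matrix (Fin 3) (Fin 3) ℝ) (i j : Fin 3) : cm M i j = (M i j : ℂ) := rfl

lemma cm_add (M N : Matrix (Fin 3) (Fin 3) ℝ) : cm (M + N) = cm M + cm N := by
  ext i j; simp [cm_apply]

lemma cm_sub (M N : Matrix (Fin 3) (Fin 3) ℝ) : cm (M - N) = cm M - cm N := by
  ext i j; simp [cm_apply]

lemma cm_smul (c : ℝ) (M : Matrix (Fin 3) (Fin 3) ℝ) : cm (c • M) = c • cm M := by
  ext i j; simp [cm_apply]

lemma cm_one : cm 1 = 1 := by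
  ext i j; simp [cm_apply, Matrix.one_apply, apply_ite]

lemma cm_mul (M N : Matrix (Fin 3) (Fin 3) ℝ) : cm (M * N) = cm M * cm N := by
  ext i j; simp [cm_apply, Matrix.mul_apply]

lemma cm_trace (M : Matrix (Fin 3) (Fin 3) ℝ) : Matrix.trace (cm M) = ((Matrix.trace M : ℝ) : ℂ) := by
  simp [Matrix.trace, cm_apply]

/-- The unnormalised real rank-one operator `|(a,b,c)⟩⟨(a,b,c)|`. -/
def rk (a b c : ℝ) : Matrix (Fin 3) (Fin 3) ℝ :=
  !![a * a, a * b, a * c; b * a, b * b, b * c; c * a, c * b, c * c]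

lemma rk_psd (a b c : ℝ) : (cm (rk a b c)).PosSemidef := by
  have : cm (rk a b c) =
      Matrix.vecMulVec ![(a : ℂ), (b : ℂ), (c : ℂ)] (star ![(a : ℂ), (b : ℂ), (c : ℂ)]) := by
    ext i j
    fin_cases i <;> fin_cases j <;> simp [cm_apply, rk, Matrix.vecMulVec_apply]
  rw [this]
  exact Matrix.posSemidef_vecMulVec_self_star _

/-- Nonnegative combinations of three rank-one operators are positive semidefinite. -/
lemma cm_psd {M : Matrix (Fin 3) (Fin 3) ℝ} {x y z : ℝ} {A B C : Matrix (Fin 3) (Fin 3) ℝ}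
    (hA : (cm A).PosSemidef) (hB : (cm B).PosSemidef) (hC : (cm C).PosSemidef)
    (hx : 0 ≤ x) (hy : 0 ≤ y) (hz : 0 ≤ z) (h : M = x • A + y • B + z • C) :
    (cm M).PosSemidef := by
  rw [h, cm_add, cm_add, cm_smul, cm_smul, cm_smul]
  exact ((hA.smul hx).add (hB.smul hy)).add (hC.smul hz)

/-- The pairing `Tr (A_u M)` of a real symmetric operator with a phase-space point operator. -/
def tw (u : Fin 3 × Fin 3) (M : Matrix (Fin 3) (Fin 3) ℝ) : ℝ :=
  M u.2 u.2 + (if u.1 = 0 then 2 else -1) * M (u.2 + 1) (u.2 + 2)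

lemma trace_Aw (u : Fin 3 × Fin 3) {M : Matrix (Fin 3) (Fin 3) ℝ} (hM : M.IsSymm) :
    Matrix.trace ((Aw u).conjTranspose * cm M) = (tw u M : ℂ) := by
  obtain ⟨p, q⟩ := u
  have h01 := hM.apply 0 1
  have h02 := hM.apply 0 2
  have h12 := hM.apply 1 2
  simp only [Matrix.trace, Matrix.diag, Matrix.mul_apply, Matrix.conjTranspose_apply, Aw_apply,
    Fin.sum_univ_three, cm_apply, tw]
  fin_cases q <;> fin_cases p <;> simp [wp, h01, h02, h12, w3_star] <;> ring

/-- Wigner expansion of a real symmetric operator. -/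
lemma cm_expand {M : Matrix (Fin 3) (Fin 3) ℝ} (hM : M.IsSymm) :
    cm M = ∑ u, (tw u M / 3) • (Aw u).conjTranspose := by
  have h01 := hM.apply 0 1
  have h02 := hM.apply 0 2
  have h12 := hM.apply 1 2
  ext i j
  rw [Matrix.sum_apply, Fintype.sum_prod_type]
  simp only [Matrix.smul_apply, Matrix.conjTranspose_apply, Aw_apply,
    Fin.sum_univ_three, cm_apply, tw]
  fin_cases i <;> fin_cases j <;> simp [wp, h01, h02, h12, w3_star] <;> ring

lemma wig_kp {n : ℕ} (u : Fin n → Fin 3 × Fin 3) (f : Fin n → Matrix (Fin 3) (Fin 3) ℝ)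
    (hf : ∀ k, (f k).IsSymm) :
    wig u (kp fun k => cm (f k)) = ((((3 : ℝ) ^ n)⁻¹ * ∏ k, tw (u k) (f k) : ℝ) : ℂ) := by
  have : AwN u = kp fun k => Aw (u k) := rfl
  rw [wig, this, kp_conjTranspose, kp_mul, kp_trace]
  push_cast
  congr 1
  exact Finset.prod_congr rfl fun k _ => trace_Aw _ (hf k)

/-! ### The cone generated by the free states -/

/-- The cone generated by `F_W`: positive semidefinite operators with nonnegative Wigner
function, of arbitrary trace. -/
def Cone {n : ℕ} (X : HMat (Fin n → Fin 3)) : Prop :=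
  X.1.PosSemidef ∧ ∀ u : Fin n → Fin 3 × Fin 3, 0 ≤ wig u X.1

lemma kp_expand {n : ℕ} {M : Matrix (Fin 3) (Fin 3) ℝ} (hM : M.IsSymm)
    (σ : Matrix (Fin n → Fin 3) (Fin n → Fin 3) ℂ) :
    Matrix.trace (kp (fun _ => cm M) * σ) = ∑ u, ((∏ k, tw (u k) M : ℝ) : ℂ) * wig u σ := by
  conv_lhs => rw [cm_expand hM]
  rw [kp_sum (fun (_ : Fin n) u => (tw u M / 3) • (Aw u).conjTranspose), Finset.sum_mul,
    Matrix.trace_sum]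
  refine Finset.sum_congr rfl fun u _ => ?_
  rw [kp_smul, ← kp_conjTranspose, wig, show AwN u = kp fun k => Aw (u k) from rfl,
    Matrix.smul_mul, Matrix.trace_smul, Complex.real_smul, Finset.prod_div_distrib]
  push_cast
  simp
  ring

lemma symm_one3 : (1 : Matrix (Fin 3) (Fin 3) ℝ).IsSymm := Matrix.isSymm_one

lemma tw_one (u : Fin 3 × Fin 3) : tw u 1 = 1 := by
  obtain ⟨p, q⟩ := u
  fin_cases q <;> simp [tw]

lemma trace_eq_sum_wig {n : ℕ} (σ : Matrix (Fin n → Fin 3) (Fin n → Fin 3) ℂ) :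
    Matrix.trace σ = ∑ u, wig u σ := by
  have := kp_expand symm_one3 σ
  simpa [cm_one, kp_one, tw_one] using this

/-- An operator whose Wigner function is bounded by `c` pairs with the cone of `F_W` by at most
`c` per copy. -/
lemma witness {n : ℕ} {M : Matrix (Fin 3) (Fin 3) ℝ} (hM : M.IsSymm) {c : ℝ}
    (hc : ∀ u, |tw u M| ≤ c) {σ : HMat (Fin n → Fin 3)} (hσ : Cone σ) :
    |(Matrix.trace (kp (fun _ => cm M) * σ.1)).re| ≤ c ^ n * (Matrix.trace σ.1).re := by
  rw [kp_expand hM, trace_eq_sum_wig, Complex.re_sum, Complex.re_sum, Finset.mul_sum]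
  refine (Finset.abs_sum_le_sum_abs _ _).trans (Finset.sum_le_sum fun u _ => ?_)
  have h0 := (Complex.le_def.mp (hσ.2 u)).1
  rw [Complex.re_ofReal_mul, abs_mul,
    abs_of_nonneg (a := (wig u σ.1).re) (by simpa using h0), Finset.abs_prod]
  refine mul_le_mul_of_nonneg_right ?_ (by simpa using h0)
  calc ∏ k, |tw (u k) M| ≤ ∏ _k : Fin n, c :=
        Finset.prod_le_prod (fun _ _ => abs_nonneg _) fun k _ => hc _
    _ = c ^ n := by simp

lemma wig_add {n : ℕ} (u : Fin n → Fin 3 × Fin 3)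
    (Y Z : Matrix (Fin n → Fin 3) (Fin n → Fin 3) ℂ) : wig u (Y + Z) = wig u Y + wig u Z := by
  simp [wig, mul_add]

lemma wig_smul {n : ℕ} (u : Fin n → Fin 3 × Fin 3) (s : ℝ)
    (Y : Matrix (Fin n → Fin 3) (Fin n → Fin 3) ℂ) : wig u (s • Y) = s * wig u Y := by
  simp only [wig, Matrix.mul_smul, Matrix.trace_smul, Complex.real_smul]; ring

/-- Free maps preserve the cone generated by `F_W`. -/
lemma IsFreeMap.cone {n m : ℕ} {Λ : HMat (Fin n → Fin 3) →ₗ[ℝ] HMat (Fin m → Fin 3)}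
    (hΛ : IsFreeMap Λ) {X : HMat (Fin n → Fin 3)} (hX : Cone X) : Cone (Λ X) := by
  obtain ⟨h1, h2, h3⟩ := hΛ
  by_cases ht : Matrix.trace X.1 = 0
  · have : X = 0 := Subtype.ext (hX.1.trace_eq_zero_iff.mp ht)
    rw [this, map_zero]
    exact ⟨Matrix.PosSemidef.zero, fun u => by simp [wig]⟩
  · have hnn := hX.1.trace_nonneg
    set t : ℝ := (Matrix.trace X.1).re with hteq
    have htc : Matrix.trace X.1 = (t : ℂ) := by
      have := Complex.le_def.mp hnn
      apply Complex.ext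
      · simp [hteq]
      · simpa using this.2.symm
    have htpos : 0 < t := by
      rw [htc] at hnn ht
      have h0 : 0 ≤ t := by exact_mod_cast hnn
      exact lt_of_le_of_ne h0 fun h => ht (by rw [← h]; simp)
    have hsm : ∀ {k : ℕ} (s : ℝ), 0 ≤ s → ∀ Y : Matrix (Fin k → Fin 3) (Fin k → Fin 3) ℂ,
        (∀ u, 0 ≤ wig u Y) → ∀ u, 0 ≤ wig u (s • Y) := fun s hs Y hY u => by
      rw [wig_smul]
      exact mul_nonneg (by exact_mod_cast hs) (hY u)
    have hmem : (t⁻¹ • X).1 ∈ FW n := by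
      rw [selfAdjoint.val_smul]
      refine ⟨hX.1.smul (by positivity), ?_, hsm _ (by positivity) _ hX.2⟩
      rw [Matrix.trace_smul, htc, Complex.real_smul]
      push_cast
      exact inv_mul_cancel₀ (by exact_mod_cast htpos.ne')
    have e : Λ X = t • Λ (t⁻¹ • X) := by
      rw [map_smul, smul_smul, mul_inv_cancel₀ htpos.ne', one_smul]
    refine ⟨h1 X hX.1, ?_⟩
    rw [e, selfAdjoint.val_smul]
    exact hsm _ htpos.le _ (h3 _ hmem).2.2

/-! ### Tensor products of operators on several copies -/

lemma kron_trace_gen {m n : ℕ} (f : Fin (m + n) → Matrix (Fin 3) (Fin 3) ℂ)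
    (Y : HMat (Fin m → Fin 3)) (Z : HMat (Fin n → Fin 3)) :
    Matrix.trace (kp f * (kron Y Z).1) =
      Matrix.trace (kp (fun k => f (Fin.castAdd n k)) * Y.1) *
        Matrix.trace (kp (fun k => f (Fin.natAdd m k)) * Z.1) := by
  simp only [Matrix.trace, Matrix.diag, Matrix.mul_apply, kp_apply, kron, Matrix.of_apply,
    Fin.prod_univ_add]
  rw [Finset.sum_mul_sum, ← Equiv.sum_comp (Fin.appendEquiv m n), Fintype.sum_prod_type]
  refine Finset.sum_congr rfl fun a _ => Finset.sum_congr rfl fun a' _ => ?_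
  rw [Finset.sum_mul_sum, ← Equiv.sum_comp (Fin.appendEquiv m n), Fintype.sum_prod_type]
  refine Finset.sum_congr rfl fun b _ => Finset.sum_congr rfl fun b' _ => ?_
  simp [Fin.appendEquiv]
  ring

lemma kron_trace {m n : ℕ} (Y : HMat (Fin m → Fin 3)) (Z : HMat (Fin n → Fin 3)) :
    Matrix.trace (kron Y Z).1 = Matrix.trace Y.1 * Matrix.trace Z.1 := by
  simpa [kp_one] using kron_trace_gen (fun _ => 1) Y Z

lemma kron_wig {m n : ℕ} (u : Fin (m + n) → Fin 3 × Fin 3)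
    (Y : HMat (Fin m → Fin 3)) (Z : HMat (Fin n → Fin 3)) :
    wig u (kron Y Z).1 =
      wig (fun k => u (Fin.castAdd n k)) Y.1 * wig (fun k => u (Fin.natAdd m k)) Z.1 := by
  have h : ∀ {k : ℕ} (v : Fin k → Fin 3 × Fin 3),
      (AwN v).conjTranspose = kp fun j => (Aw (v j)).conjTranspose :=
    fun v => kp_conjTranspose fun j => Aw (v j)
  simp only [wig, h]
  rw [kron_trace_gen, pow_add, mul_inv]
  ring

lemma kron_psd {m n : ℕ} {Y : HMat (Fin m → Fin 3)} {Z : HMat (Fin n → Fin 3)}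
    (hY : Y.1.PosSemidef) (hZ : Z.1.PosSemidef) : (kron Y Z).1.PosSemidef :=
  (hY.kronecker hZ).submatrix fun i : Fin (m + n) → Fin 3 =>
    ((fun k => i (Fin.castAdd n k)), fun k => i (Fin.natAdd m k))

lemma Cone.kron {m n : ℕ} {Y : HMat (Fin m → Fin 3)} {Z : HMat (Fin n → Fin 3)}
    (hY : Cone Y) (hZ : Cone Z) : Cone (kron Y Z) :=
  ⟨kron_psd hY.1 hZ.1, fun u => by rw [kron_wig]; exact mul_nonneg (hY.2 _) (hZ.2 _)⟩

lemma Cone.add {n : ℕ} {Y Z : HMat (Fin n → Fin 3)} (hY : Cone Y) (hZ : Cone Z) :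
    Cone (Y + Z) :=
  ⟨hY.1.add hZ.1, fun u => by
    rw [show (Y + Z).1 = Y.1 + Z.1 from rfl, wig_add]; exact add_nonneg (hY.2 u) (hZ.2 u)⟩

/-! ### The Norrell state -/

/-- The projector `|N⟩⟨N|` as a real matrix. -/
def mN : Matrix (Fin 3) (Fin 3) ℝ := (1 / 6 : ℝ) • rk (-1) 2 (-1)
/-- The projector onto the strange state `(|0⟩ - |2⟩)/√2`, orthogonal to `|N⟩`. -/
def mS : Matrix (Fin 3) (Fin 3) ℝ := (1 / 2 : ℝ) • rk 1 0 (-1)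
/-- The projector onto the stabilizer state `(|0⟩ + |1⟩ + |2⟩)/√3`, orthogonal to `|N⟩`. -/
def mP : Matrix (Fin 3) (Fin 3) ℝ := (1 / 3 : ℝ) • rk 1 1 1
/-- The operator `K` for which adding `K ⊗ P + P ⊗ K + P ⊗ P / 3` to `N ⊗ N` gives an element of
the cone generated by `F_W`; its coefficients solve the linear program minimising the added trace
over operators diagonal in the product basis of `N`, `S`, `P`. -/
def mK : Matrix (Fin 3) (Fin 3) ℝ := (5 / 12 : ℝ) • mN + (1 / 12 : ℝ) • mS
/-- The dual witness `Y = N + S/3 ≥ N` for the overlap of `N` with `F_W`. -/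
def mY : Matrix (Fin 3) (Fin 3) ℝ := mN + (1 / 3 : ℝ) • mS

lemma rk_symm (a b c : ℝ) : (rk a b c).IsSymm := by
  ext i j
  fin_cases i <;> fin_cases j <;> simp [rk] <;> ring

lemma mN_symm : mN.IsSymm := (rk_symm _ _ _).smul _
lemma mS_symm : mS.IsSymm := (rk_symm _ _ _).smul _
lemma mP_symm : mP.IsSymm := (rk_symm _ _ _).smul _
lemma mK_symm : mK.IsSymm := (mN_symm.smul _).add (mS_symm.smul _)
lemma mY_symm : mY.IsSymm := mN_symm.add (mS_symm.smul _)

lemma cm_smul_psd {M : Matrix (Fin 3) (Fin 3) ℝ} {c : ℝ} (hc : 0 ≤ c) (hM : (cm M).PosSemidef) :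
    (cm (c • M)).PosSemidef := by
  rw [cm_smul]; exact hM.smul hc

lemma mN_psd : (cm mN).PosSemidef := cm_smul_psd (by norm_num) (rk_psd _ _ _)
lemma mS_psd : (cm mS).PosSemidef := cm_smul_psd (by norm_num) (rk_psd _ _ _)
lemma mP_psd : (cm mP).PosSemidef := cm_smul_psd (by norm_num) (rk_psd _ _ _)
lemma mK_psd : (cm mK).PosSemidef := by
  rw [mK, cm_add]
  exact (cm_smul_psd (by norm_num) mN_psd).add (cm_smul_psd (by norm_num) mS_psd)

lemma one_eq_NSP : (1 : Matrix (Fin 3) (Fin 3) ℝ) = mN + mS + mP := by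
  ext i j
  fin_cases i <;> fin_cases j <;> simp [mN, mS, mP, rk] <;> norm_num

/-- On the nine phase-space points the Wigner functions of `N`, `S`, `P` take only three joint
values. -/
lemma tw_cases (u : Fin 3 × Fin 3) :
    (tw u mN = 1 ∧ tw u mS = -1 ∧ tw u mP = 1) ∨
    (tw u mN = -1 / 2 ∧ tw u mS = 1 / 2 ∧ tw u mP = 1) ∨
    (tw u mN = 1 / 2 ∧ tw u mS = 1 / 2 ∧ tw u mP = 0) := by
  obtain ⟨p, q⟩ := u
  fin_cases q <;> fin_cases p <;> simp [tw, mN, mS, mP, rk] <;> norm_num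

lemma tw_add (u : Fin 3 × Fin 3) (A B : Matrix (Fin 3) (Fin 3) ℝ) :
    tw u (A + B) = tw u A + tw u B := by
  simp only [tw, Matrix.add_apply]; ring

lemma tw_smul (u : Fin 3 × Fin 3) (c : ℝ) (A : Matrix (Fin 3) (Fin 3) ℝ) :
    tw u (c • A) = c * tw u A := by
  simp only [tw, Matrix.smul_apply, smul_eq_mul]; ring

lemma mY_tw (u : Fin 3 × Fin 3) : |tw u mY| ≤ 2 / 3 := by
  rw [mY, tw_add, tw_smul, abs_le]
  rcases tw_cases u with ⟨h1, h2, -⟩ | ⟨h1, h2, -⟩ | ⟨h1, h2, -⟩ <;> rw [h1, h2] <;> norm_num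

lemma mN_trace : Matrix.trace mN = 1 := by
  simp [mN, rk, Matrix.trace, Fin.sum_univ_three]; norm_num

lemma mP_trace : Matrix.trace mP = 1 := by
  simp [mP, rk, Matrix.trace, Fin.sum_univ_three]; norm_num

lemma mK_trace : Matrix.trace mK = 1 / 2 := by
  simp [mK, mN, mS, rk, Matrix.trace, Fin.sum_univ_three]; norm_num

lemma mN_mul : mN * mN = mN := by
  ext i j
  fin_cases i <;> fin_cases j <;>
    simp [mN, rk, Matrix.mul_apply, Fin.sum_univ_three] <;> norm_num

lemma rankOne_apply {ι : Type} [Fintype ι] [DecidableEq ι] (v : ι → ℂ) (i j : ι) :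
    (rankOne v).1 i j = v i * star (v j) := rfl

lemma rhoN_eq : rhoN.1 = cm mN := by
  have h6 : ((Real.sqrt 6 : ℝ) : ℂ) * (Real.sqrt 6 : ℝ) = 6 := by
    rw [← Complex.ofReal_mul, Real.mul_self_sqrt (by norm_num)]; norm_num
  have hne : ((Real.sqrt 6 : ℝ) : ℂ) ≠ 0 := by
    intro h; rw [h] at h6; norm_num at h6
  ext i j
  have e : rhoN.1 i j = (![(-1 : ℂ), 2, -1] i * ![(-1 : ℂ), 2, -1] j) / 6 := by
    rw [rhoN, rankOne_apply, vN, vN, ← h6]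
    rw [star_div₀, show star ((Real.sqrt 6 : ℝ) : ℂ) = (Real.sqrt 6 : ℝ) from Complex.conj_ofReal _,
      div_mul_div_comm]
    congr 2
    fin_cases j <;> simp
  rw [e, cm_apply]
  fin_cases i <;> fin_cases j <;> simp [mN, rk] <;> norm_num

lemma tpow_rhoN (n : ℕ) : (tpow rhoN n).1 = kp fun _ => cm mN := by
  rw [← rhoN_eq]; rfl

/-- The correction `K ⊗ P + P ⊗ K + P ⊗ P / 3`, of trace `4/3`. -/
def corrM : Matrix (Fin 2 → Fin 3) (Fin 2 → Fin 3) ℂ :=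
  kp (fun k => cm (![mK, mP] k)) + kp (fun k => cm (![mP, mK] k)) +
    (1 / 3 : ℝ) • kp (fun k => cm (![mP, mP] k))

lemma corrM_psd : corrM.PosSemidef := by
  refine ((kp_psd fun k => ?_).add (kp_psd fun k => ?_)).add
    ((kp_psd fun k => ?_).smul (by norm_num : (0 : ℝ) ≤ 1 / 3))
  all_goals fin_cases k <;> first | exact mK_psd | exact mP_psd

/-- `corrM` as a self-adjoint operator. -/
def corr : HMat (Fin 2 → Fin 3) := ⟨corrM, corrM_psd.isHermitian.isSelfAdjoint⟩

lemma corr_wig (u : Fin 2 → Fin 3 × Fin 3) :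
    wig u corr.1 = ((((3 : ℝ) ^ 2)⁻¹ * (tw (u 0) mK * tw (u 1) mP + tw (u 0) mP * tw (u 1) mK +
      1 / 3 * (tw (u 0) mP * tw (u 1) mP)) : ℝ) : ℂ) := by
  rw [show corr.1 = corrM from rfl, corrM, wig_add, wig_add, wig_smul, wig_kp, wig_kp, wig_kp]
  · simp only [Fin.prod_univ_two, Matrix.cons_val_zero, Matrix.cons_val_one]
    push_cast
    ring
  all_goals
    intro k
    fin_cases k <;> first | exact mK_symm | exact mP_symm

lemma corr_trace : Matrix.trace corr.1 = ((4 / 3 : ℝ) : ℂ) := by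
  rw [show corr.1 = corrM from rfl, corrM, Matrix.trace_add, Matrix.trace_add, Matrix.trace_smul,
    kp_trace, kp_trace, kp_trace]
  simp [Fin.prod_univ_two, cm_trace, mK_trace, mP_trace]
  norm_num

lemma corr_cone : Cone corr := by
  refine ⟨corrM_psd, fun u => ?_⟩
  rw [corr_wig]
  norm_cast
  refine mul_nonneg (by positivity) ?_
  rw [mK, tw_add, tw_smul, tw_smul, tw_add, tw_smul, tw_smul]
  rcases tw_cases (u 0) with ⟨h1, h2, h3⟩ | ⟨h1, h2, h3⟩ | ⟨h1, h2, h3⟩ <;>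
  rcases tw_cases (u 1) with ⟨g1, g2, g3⟩ | ⟨g1, g2, g3⟩ | ⟨g1, g2, g3⟩ <;>
  rw [h1, h2, h3, g1, g2, g3] <;> norm_num

lemma corr_add_cone : Cone (tpow rhoN 2 + corr) := by
  refine ⟨?_, fun u => ?_⟩
  · have : (tpow rhoN 2).1.PosSemidef := by
      rw [tpow_rhoN]; exact kp_psd fun _ => mN_psd
    exact this.add corrM_psd
  rw [show (tpow rhoN 2 + corr).1 = (tpow rhoN 2).1 + corr.1 from rfl, wig_add, corr_wig,
    tpow_rhoN, wig_kp _ _ fun _ => mN_symm, ← Complex.ofReal_add]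
  norm_cast
  rw [← mul_add]
  refine mul_nonneg (by positivity) ?_
  rw [Fin.prod_univ_two, mK, tw_add, tw_smul, tw_smul, tw_add, tw_smul, tw_smul]
  rcases tw_cases (u 0) with ⟨h1, h2, h3⟩ | ⟨h1, h2, h3⟩ | ⟨h1, h2, h3⟩ <;>
  rcases tw_cases (u 1) with ⟨g1, g2, g3⟩ | ⟨g1, g2, g3⟩ | ⟨g1, g2, g3⟩ <;>
  rw [h1, h2, h3, g1, g2, g3] <;> norm_num

lemma tpow_trace_rhoN (n : ℕ) : Matrix.trace (tpow rhoN n).1 = 1 := by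
  rw [tpow_rhoN, kp_trace]; simp [cm_trace, mN_trace]

/-- The even tensor powers of the Norrell state are differences of elements of the cone generated
by `F_W`, with total weight `(11/3)^k` for `2k` copies: the weights of `N ⊗ N` are `7/3` and `4/3`,
and the total weight is submultiplicative under tensor products. -/
lemma robust (k : ℕ) : ∃ P M : HMat (Fin (2 * k) → Fin 3), Cone P ∧ Cone M ∧
    tpow rhoN (2 * k) = P - M ∧
      (Matrix.trace P.1).re + (Matrix.trace M.1).re = (11 / 3) ^ k := by
  have him : ∀ {n : ℕ} {X : HMat (Fin n → Fin 3)}, Cone X →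
      Matrix.trace X.1 = ((Matrix.trace X.1).re : ℂ) := fun hX => by
    have := Complex.le_def.mp hX.1.trace_nonneg
    exact Complex.ext (by simp) (by simpa using this.2.symm)
  induction k with
  | zero =>
    refine ⟨tpow rhoN 0, 0, ⟨?_, fun u => ?_⟩, ⟨Matrix.PosSemidef.zero, fun u => by simp [wig]⟩,
      by simp, ?_⟩
    · rw [tpow_rhoN]; exact kp_psd fun _ => mN_psd
    · rw [tpow_rhoN, wig_kp _ _ fun _ => mN_symm]; simp
    · rw [tpow_trace_rhoN]; simp
  | succ k ih =>
    obtain ⟨P, M, hP, hM, hPM, htr⟩ := ih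
    have h2 : (Matrix.trace (tpow rhoN 2 + corr).1).re = 7 / 3 := by
      rw [show (tpow rhoN 2 + corr).1 = (tpow rhoN 2).1 + corr.1 from rfl, Matrix.trace_add,
        tpow_trace_rhoN, corr_trace, Complex.add_re, Complex.ofReal_re, Complex.one_re]
      norm_num
    have h2' : (Matrix.trace corr.1).re = 4 / 3 := by rw [corr_trace, Complex.ofReal_re]
    refine ⟨kron P (tpow rhoN 2 + corr) + kron M corr,
      kron P corr + kron M (tpow rhoN 2 + corr),
      (hP.kron corr_add_cone).add (hM.kron corr_cone),
      (hP.kron corr_cone).add (hM.kron corr_add_cone), ?_, ?_⟩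
    · have e : tpow rhoN (2 * k + 2) = kron (tpow rhoN (2 * k)) (tpow rhoN 2) := by
        apply Subtype.ext
        ext i j
        exact Fin.prod_univ_add (a := 2 * k) (b := 2) fun l => rhoN.1 (i l) (j l)
      refine e.trans ?_
      rw [hPM]
      generalize tpow rhoN 2 = T
      apply Subtype.ext
      ext i j
      simp [kron]
      ring
    · have e1 : ∀ A B C E : HMat _, (Matrix.trace (kron (m := 2 * k) (n := 2) (d := 3) A B +
          kron C E).1) = Matrix.trace A.1 * Matrix.trace B.1 +
            Matrix.trace C.1 * Matrix.trace E.1 := fun A B C E => by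
        rw [← kron_trace, ← kron_trace, ← Matrix.trace_add]; rfl
      have hmul : ∀ a b c d : ℝ, ((a : ℂ) * b + c * d).re = a * b + c * d := fun a b c d => by
        norm_cast
      have e2 : ∀ {A C : HMat (Fin (2 * k) → Fin 3)} {B E : HMat (Fin 2 → Fin 3)}, Cone A →
          Cone B → Cone C → Cone E → (Matrix.trace (kron A B + kron C E).1).re =
            (Matrix.trace A.1).re * (Matrix.trace B.1).re +
              (Matrix.trace C.1).re * (Matrix.trace E.1).re := fun hA hB hC hE => by
        rw [e1, him hA, him hB, him hC, him hE, hmul]; simp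
      refine (congrArg₂ (· + ·) (e2 hP corr_add_cone hM corr_cone)
        (e2 hP corr_cone hM corr_add_cone)).trans ?_
      simp only [h2, h2']
      rw [pow_succ, ← htr]
      ring

/-! ### The Hadamard eigenstate -/

lemma s3 : Real.sqrt 3 * Real.sqrt 3 = 3 := Real.mul_self_sqrt (by norm_num)

lemma s3_lt : Real.sqrt 3 < 7 / 4 := by
  rw [Real.sqrt_lt' (by norm_num)]; norm_num

lemma lt_s3 : 1.73 < Real.sqrt 3 := by
  rw [Real.lt_sqrt (by norm_num)]; norm_num

/-- The projector `|H₊⟩⟨H₊|`, with `|H₊⟩ ∝ (1 + √3, 1, 1)`. -/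
def mH : Matrix (Fin 3) (Fin 3) ℝ := ((3 - Real.sqrt 3) / 12) • rk (1 + Real.sqrt 3) 1 1
/-- The projector onto the eigenvector `∝ (√3 - 1, -1, -1)` of the Hadamard matrix. -/
def mH' : Matrix (Fin 3) (Fin 3) ℝ := ((3 + Real.sqrt 3) / 12) • rk (Real.sqrt 3 - 1) (-1) (-1)
/-- The projector onto the eigenvector `∝ (0, 1, -1)` of the Hadamard matrix. -/
def mO : Matrix (Fin 3) (Fin 3) ℝ := (1 / 2 : ℝ) • rk 0 1 (-1)
/-- The even mixture of the stabilizer states `|0⟩` and `(|0⟩ + |1⟩ + |2⟩)/√3`. -/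
def mσ : Matrix (Fin 3) (Fin 3) ℝ := (1 / 2 : ℝ) • rk 1 0 0 + (1 / 6 : ℝ) • rk 1 1 1
/-- The dual witness for `H₊`: a multiple of the sign of its Wigner function, normalised so that
`Tr (Q H₊) = 1`. The factor `(2√3 - 1)/11` is `1/(1 + 2√3)`. -/
def mQ : Matrix (Fin 3) (Fin 3) ℝ :=
  ((2 * Real.sqrt 3 - 1) / 11) • !![3, 2, 2; 2, -1, 0; 2, 0, -1]

lemma mH_psd : (cm mH).PosSemidef :=
  cm_smul_psd (by have := s3_lt; linarith) (rk_psd _ _ _)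
lemma mH'_psd : (cm mH').PosSemidef :=
  cm_smul_psd (by have := lt_s3; linarith) (rk_psd _ _ _)
lemma mO_psd : (cm mO).PosSemidef := cm_smul_psd (by norm_num) (rk_psd _ _ _)
lemma mσ_symm : mσ.IsSymm := ((rk_symm _ _ _).smul _).add ((rk_symm _ _ _).smul _)
lemma mσ_psd : (cm mσ).PosSemidef := by
  rw [mσ, cm_add]
  exact (cm_smul_psd (by norm_num) (rk_psd _ _ _)).add (cm_smul_psd (by norm_num) (rk_psd _ _ _))

lemma mQ_symm : mQ.IsSymm := by
  refine Matrix.IsSymm.smul ?_ _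
  ext i j
  fin_cases i <;> fin_cases j <;> simp

lemma mQ_tw (u : Fin 3 × Fin 3) : |tw u mQ| ≤ 3 * ((2 * Real.sqrt 3 - 1) / 11) := by
  have h := lt_s3
  rw [mQ, tw_smul, abs_mul, abs_of_nonneg (by linarith), mul_comm]
  refine mul_le_mul_of_nonneg_right ?_ (by linarith)
  obtain ⟨p, q⟩ := u
  fin_cases q <;> fin_cases p <;> simp [tw] <;> norm_num

lemma mσ_tw (u : Fin 3 × Fin 3) : 0 ≤ tw u mσ := by
  obtain ⟨p, q⟩ := u
  fin_cases q <;> fin_cases p <;> simp [tw, mσ, rk] <;> norm_num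

lemma mσ_trace : Matrix.trace mσ = 1 := by
  simp [mσ, rk, Matrix.trace, Fin.sum_univ_three]; norm_num

lemma mσ_dom : (3 - Real.sqrt 3) • mσ - mH = (2 - Real.sqrt 3) • mH' := by
  have h := s3
  ext i j
  fin_cases i <;> fin_cases j <;> simp [mσ, mH, mH', rk] <;> grind

lemma mQ_sub : 1 - mQ = (0 : ℝ) • mH + ((24 - 4 * Real.sqrt 3) / 11) • mH' +
    ((10 + 2 * Real.sqrt 3) / 11) • mO := by
  have h := s3
  ext i j
  fin_cases i <;> fin_cases j <;> simp [mQ, mO, mH', rk] <;> grind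

lemma mQ_add : 1 + mQ = (2 : ℝ) • mH + (2 * ((2 * Real.sqrt 3 - 1) / 11)) • mH' +
    ((12 - 2 * Real.sqrt 3) / 11) • mO := by
  have h := s3
  ext i j
  fin_cases i <;> fin_cases j <;> simp [mQ, mO, mH, mH', rk] <;> grind

lemma mQ_sub_psd : (1 - cm mQ).PosSemidef := by
  have h := lt_s3
  have h' := s3_lt
  rw [← cm_one, ← cm_sub]
  exact cm_psd mH_psd mH'_psd mO_psd le_rfl (by linarith) (by linarith) mQ_sub

lemma mQ_add_psd : (1 + cm mQ).PosSemidef := by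
  have h := lt_s3
  have h' := s3_lt
  rw [← cm_one, ← cm_add]
  exact cm_psd mH_psd mH'_psd mO_psd (by norm_num) (by linarith) (by linarith) mQ_add

lemma mQH_trace : Matrix.trace (mQ * mH) = 1 := by
  have h := s3
  simp [mQ, mH, rk, Matrix.trace, Fin.sum_univ_three]
  grind

/-- The eigenvalue equation determines `|H₊⟩` up to a phase. -/
lemma rankOne_vH (v : Fin 3 → ℂ) (hv : Hq.mulVec v = v) (hu : ∑ j, Complex.normSq (v j) = 1) :
    (rankOne v).1 = cm mH := by
  set s : ℂ := ((Real.sqrt 3 : ℝ) : ℂ) with hs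
  have hss : s * s = 3 := by rw [hs, ← Complex.ofReal_mul, s3]; norm_num
  have hs0 : s ≠ 0 := by intro h; rw [h] at hss; norm_num at hss
  have hw := w3_sq
  have h0 := congrFun hv 0
  have h1 := congrFun hv 1
  have h2 := congrFun hv 2
  simp only [Matrix.mulVec, dotProduct, Fin.sum_univ_three, Hq, Matrix.of_apply, ← hs] at h0 h1 h2
  simp at h0 h1 h2
  have e0 : v 0 + v 1 + v 2 = s * v 0 := by
    linear_combination s * h0 - (v 0 + v 1 + v 2) * mul_inv_cancel₀ hs0
  have e1 : v 0 + w3 * v 1 + w3 ^ 2 * v 2 = s * v 1 := by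
    conv_rhs => rw [← h1]
    field_simp
  have e2 : v 0 + w3 ^ 2 * v 1 + w3 ^ 4 * v 2 = s * v 2 := by
    conv_rhs => rw [← h2]
    field_simp
  have e4 : w3 ^ 4 = w3 := by linear_combination w3 * w3_cube
  rw [e4] at e2
  -- `v 1 - v 2` would be an eigenvector of `(ω - ω²)/√3 = i` with eigenvalue `1`.
  have d1 : (w3 - w3 ^ 2) * (v 1 - v 2) = s * (v 1 - v 2) := by linear_combination e1 - e2
  have d2 : (w3 - w3 ^ 2) ^ 2 = -3 := by rw [hw]; linear_combination 4 * hw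
  have d3 : (6 : ℂ) * (v 1 - v 2) = 0 := by
    linear_combination (-(w3 - w3 ^ 2) - s) * d1 + (v 1 - v 2) * d2 - (v 1 - v 2) * hss
  have d4 : v 2 = v 1 := by
    have := (mul_eq_zero.mp d3).resolve_left (by norm_num)
    linear_combination -this
  have d5 : v 0 = (1 + s) * v 1 := by
    rw [d4] at e0
    linear_combination (-(1 + s) / 2) * e0 - v 0 / 2 * hss
  have hn : Complex.normSq (v 1) = (3 - Real.sqrt 3) / 12 := by
    rw [Fin.sum_univ_three, d4, d5, Complex.normSq_mul,
      show (1 : ℂ) + s = ((1 + Real.sqrt 3 : ℝ) : ℂ) by rw [hs]; push_cast; ring,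
      Complex.normSq_ofReal] at hu
    have h := s3
    linear_combination (3 - Real.sqrt 3) / 12 * hu +
      (Complex.normSq (v 1) * (Real.sqrt 3 - 1) / 12) * h
  have hm : v 1 * star (v 1) = (((3 - Real.sqrt 3) / 12 : ℝ) : ℂ) := by
    rw [← hn]; exact Complex.mul_conj _
  -- all entries are `r i * r j * |v 1|²` with `r = (1 + √3, 1, 1)`
  have hr : ∀ i, v i = ((![1 + Real.sqrt 3, 1, 1] i : ℝ) : ℂ) * v 1 := by
    intro i
    fin_cases i
    · simpa [hs] using d5
    · simp
    · simpa using d4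
  ext i j
  rw [rankOne_apply, hr i, hr j, star_mul',
    show ∀ x : ℝ, star (x : ℂ) = x from Complex.conj_ofReal, mul_mul_mul_comm, hm, cm_apply,
    ← Complex.ofReal_mul, ← Complex.ofReal_mul]
  congr 1
  fin_cases i <;> fin_cases j <;> simp [mH, rk] <;> ring

/-! ### Rates -/

/-- Exponential decay at a rate `D log (1/r)` exceeding the growth rate `log L` is impossible. -/
lemma rate_bound {L r D : ℝ} (hL : 0 < L) (hr0 : 0 < r) (hr1 : r < 1)
    (h : ∀ᶠ n : ℕ in atTop, 1 / 2 ≤ L ^ n * r ^ ⌊D * (n : ℝ)⌋₊) :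
    D * Real.log r⁻¹ ≤ Real.log L := by
  by_contra! hlt
  rw [Real.log_inv] at hlt
  set δ := D * -Real.log r - Real.log L with hδ
  have hδ0 : 0 < δ := by linarith
  obtain ⟨N, hN⟩ := exists_nat_gt ((Real.log 2 - Real.log r) / δ)
  obtain ⟨n, hn, hnN⟩ := (h.and (eventually_ge_atTop N)).exists
  have hlog := Real.log_le_log (by norm_num) hn
  rw [Real.log_mul (by positivity) (by positivity), Real.log_pow, Real.log_pow, one_div,
    Real.log_inv] at hlog
  have hfl : D * (n : ℝ) - 1 < (⌊D * (n : ℝ)⌋₊ : ℝ) := Nat.sub_one_lt_floor _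
  have hlr : Real.log r < 0 := Real.log_neg hr0 hr1
  have h1 : (⌊D * (n : ℝ)⌋₊ : ℝ) * Real.log r ≤ (D * n - 1) * Real.log r :=
    mul_le_mul_of_nonpos_right hfl.le hlr.le
  have h2 : (N : ℝ) ≤ n := by exact_mod_cast hnN
  have h3 : Real.log 2 - Real.log r < N * δ := by rwa [div_lt_iff₀ hδ0] at hN
  have h4 : (N : ℝ) * δ ≤ n * δ := mul_le_mul_of_nonneg_right h2 hδ0.le
  rw [hδ] at h3 h4
  linarith

lemma hip_sub {ι : Type} [Fintype ι] [DecidableEq ι] (Q X Y : HMat ι) :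
    hip Q (X - Y) = hip Q X - hip Q Y := by
  simp [hip, Matrix.mul_sub, Matrix.trace_sub]

/-- A normalised test `-1 ≤ Q ≤ 1` with `⟨Q, Y⟩ = 1` detects trace-norm proximity to `Y`. -/
lemma one_sub_le_hip {ι : Type} [Fintype ι] [DecidableEq ι] (Q X Y : HMat ι)
    (h1 : (1 - Q.1).PosSemidef) (h2 : (1 + Q.1).PosSemidef) (hQ : hip Q Y = 1) :
    1 - trNorm (X - Y) ≤ hip Q X := by
  have := (abs_le.mp (hip_le_trNorm Q (X - Y) h1 h2)).1
  rw [hip_sub, hQ] at this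
  linarith

lemma tpow_contr {n : ℕ} (A : HMat (Fin 3)) (h1 : (1 - A.1).PosSemidef)
    (h2 : (1 + A.1).PosSemidef) :
    (1 - (tpow A n).1).PosSemidef ∧ (1 + (tpow A n).1).PosSemidef := by
  rw [show (tpow A n).1 = kp fun _ => A.1 from rfl]
  refine ⟨?_, ?_⟩
  · simpa using kp_contr (n := n) h1 h2 1 (by simp)
  · simpa using kp_contr (n := n) h1 h2 (-1) (by simp)

/-- Upper bound for `H₊ → N`: `H₊ ≤ (3 - √3) σ` with `σ` free bounds the image of `H₊^{⊗n}` by a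
multiple of an element of `F_W`, whose overlap with `N^{⊗m}` is at most `(2/3)^m`. -/
lemma overlap_N {n m : ℕ} {Γ : HMat (Fin n → Fin 3) →ₗ[ℝ] HMat (Fin m → Fin 3)}
    (hΓ : IsFreeMap Γ) (v : HMat (Fin 3)) (hv : v.1 = cm mH) :
    1 - trNorm (Γ (tpow v n) - tpow rhoN m) ≤ (3 - Real.sqrt 3) ^ n * (2 / 3) ^ m := by
  have hs := s3_lt
  have hNadd : (1 + rhoN.1).PosSemidef := by
    rw [rhoN_eq]; exact Matrix.PosSemidef.one.add mN_psd
  have hNsub : (1 - rhoN.1).PosSemidef := by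
    rw [rhoN_eq, ← cm_one, ← cm_sub, one_eq_NSP, show mN + mS + mP - mN = mS + mP by abel, cm_add]
    exact mS_psd.add mP_psd
  obtain ⟨c1, c2⟩ := tpow_contr (n := m) rhoN hNsub hNadd
  have hNN : hip (tpow rhoN m) (tpow rhoN m) = 1 := by
    rw [hip, tpow_rhoN, kp_mul, ← cm_mul, mN_mul, kp_trace]
    simp [cm_trace, mN_trace]
  refine (one_sub_le_hip _ _ _ c1 c2 hNN).trans ?_
  have hσpsd : (kp fun _ : Fin n => cm mσ).PosSemidef := kp_psd fun _ => mσ_psd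
  set Sn : HMat (Fin n → Fin 3) := ⟨kp fun _ => cm mσ, hσpsd.isHermitian.isSelfAdjoint⟩ with hS
  have hcone : Cone Sn := ⟨hσpsd, fun u => by
    rw [hS, wig_kp _ _ fun _ => mσ_symm]
    norm_cast
    exact mul_nonneg (by positivity) (Finset.prod_nonneg fun _ _ => mσ_tw _)⟩
  have hStr : Matrix.trace Sn.1 = 1 := by
    rw [hS, kp_trace]; simp [cm_trace, mσ_trace]
  have hdom : (((3 - Real.sqrt 3) ^ n • Sn - tpow v n).1).PosSemidef := by
    have h1 : (cm ((3 - Real.sqrt 3) • mσ) - cm mH).PosSemidef := by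
      rw [← cm_sub, mσ_dom]
      exact cm_smul_psd (by linarith) mH'_psd
    have h2 := kp_mono (n := n) mH_psd h1
    have e1 : kp (fun _ : Fin n => cm ((3 - Real.sqrt 3) • mσ)) =
        (3 - Real.sqrt 3) ^ n • kp fun _ => cm mσ := by
      rw [cm_smul, kp_smul (fun _ => 3 - Real.sqrt 3)]; simp
    have e2 : (tpow v n).1 = kp fun _ => cm mH := by rw [← hv]; rfl
    rw [e1, ← e2] at h2
    exact h2
  have himg := hΓ.1 _ hdom
  rw [map_sub, map_smul] at himg
  have hNpsd : (tpow rhoN m).1.PosSemidef := by rw [tpow_rhoN]; exact kp_psd fun _ => mN_psd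
  have s1 : hip (tpow rhoN m) (Γ (tpow v n)) ≤
      (3 - Real.sqrt 3) ^ n * hip (tpow rhoN m) (Γ Sn) := by
    have h : 0 ≤ hip (tpow rhoN m) ((3 - Real.sqrt 3) ^ n • Γ Sn - Γ (tpow v n)) :=
      trace_mul_nonneg hNpsd himg
    have e : hip (tpow rhoN m) ((3 - Real.sqrt 3) ^ n • Γ Sn) =
        (3 - Real.sqrt 3) ^ n * hip (tpow rhoN m) (Γ Sn) := by
      rw [hip, hip, selfAdjoint.val_smul, Matrix.mul_smul, Matrix.trace_smul, Complex.smul_re,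
        smul_eq_mul]
    rw [hip_sub, e] at h
    linarith
  have hΓc := hΓ.cone hcone
  have s2 : hip (tpow rhoN m) (Γ Sn) ≤ (2 / 3) ^ m := by
    have hYN : (cm mY - cm mN).PosSemidef := by
      rw [← cm_sub, mY, add_sub_cancel_left]
      exact cm_smul_psd (by norm_num) mS_psd
    have h := trace_mul_nonneg (kp_mono (n := m) mN_psd hYN) hΓc.1
    rw [Matrix.sub_mul, Matrix.trace_sub, Complex.sub_re, ← tpow_rhoN] at h
    have hw := (abs_le.mp (witness mY_symm mY_tw hΓc)).2
    rw [hΓ.2.1, hStr, Complex.one_re, mul_one] at hw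
    rw [hip]
    linarith
  exact s1.trans (mul_le_mul_of_nonneg_left s2 (pow_nonneg (by linarith) _))

/-- Upper bound for `N → H₊`: split `N^{⊗2k}` into elements of the cone of `F_W` of total weight
`(11/3)^k`; the witness `Q^{⊗m}` pairs with their images by at most `(3/(1 + 2√3))^m` per unit of
weight. -/
lemma overlap_H {k m : ℕ} {Λ : HMat (Fin (2 * k) → Fin 3) →ₗ[ℝ] HMat (Fin m → Fin 3)}
    (hΛ : IsFreeMap Λ) (v : HMat (Fin 3)) (hv : v.1 = cm mH) :
    1 - trNorm (Λ (tpow rhoN (2 * k)) - tpow v m) ≤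
      (11 / 3) ^ k * (3 * ((2 * Real.sqrt 3 - 1) / 11)) ^ m := by
  have hQherm : (cm mQ).IsHermitian := by
    have := (Matrix.isHermitian_one (n := Fin 3) (α := ℂ)).sub mQ_sub_psd.isHermitian
    rwa [sub_sub_cancel] at this
  set Q : HMat (Fin 3) := ⟨cm mQ, hQherm.isSelfAdjoint⟩ with hQ
  obtain ⟨c1, c2⟩ := tpow_contr (n := m) Q mQ_sub_psd mQ_add_psd
  have hQm : (tpow Q m).1 = kp fun _ => cm mQ := rfl
  have hQH : hip (tpow Q m) (tpow v m) = 1 := by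
    have e2 : (tpow v m).1 = kp fun _ => cm mH := by rw [← hv]; rfl
    rw [hip, e2, hQm, kp_mul, ← cm_mul, kp_trace]
    simp [cm_trace, mQH_trace]
  refine (one_sub_le_hip _ _ _ c1 c2 hQH).trans ?_
  obtain ⟨P, M, hP, hM, hPM, htr⟩ := robust k
  rw [hPM, map_sub, hip_sub]
  have w1 := (abs_le.mp (witness mQ_symm mQ_tw (hΛ.cone hP))).2
  have w2 := (abs_le.mp (witness mQ_symm mQ_tw (hΛ.cone hM))).1
  rw [hΛ.2.1, ← hQm] at w1 w2
  rw [hip, hip, ← htr, add_mul]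
  linarith

lemma eventually_half {f : ℕ → ℝ} (h : Tendsto (fun n => (1 / 2) * f n) atTop (nhds 0)) :
    ∀ᶠ n in atTop, 1 / 2 ≤ 1 - f n := by
  filter_upwards [h.eventually (gt_mem_nhds (show (0 : ℝ) < 1 / 4 by norm_num))] with n hn
  linarith

lemma Q_factor : 3 * ((2 * Real.sqrt 3 - 1) / 11) = ((1 + 2 * Real.sqrt 3) / 3)⁻¹ := by
  have h := s3
  have h' := lt_s3
  have : (1 + 2 * Real.sqrt 3) ≠ 0 := by linarith
  rw [eq_comm, inv_eq_iff_eq_inv, eq_comm, inv_eq_of_mul_eq_one_left]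
  linear_combination 4 / 11 * h

/-- The numerical inequality, from `(11/3)^13 < (9/4)^21`, `(3 - √3)^5 < ((1 + 2√3)/3)^3` and
`(21/13) (3/5) < 1`. -/
lemma numeric : (Real.log (11 / 3) * Real.log (3 - Real.sqrt 3)) <
    (Real.log (9 / 4) * Real.log ((1 + 2 * Real.sqrt 3) / 3)) := by
  have h := s3
  have hl := lt_s3
  have hu := s3_lt
  have p1 : 13 * Real.log (11 / 3) ≤ 21 * Real.log (9 / 4) := by
    have := Real.log_le_log (by norm_num) (show ((11 : ℝ) / 3) ^ 13 ≤ (9 / 4) ^ 21 by norm_num)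
    rw [Real.log_pow, Real.log_pow] at this
    exact_mod_cast this
  have p2 : 5 * Real.log (3 - Real.sqrt 3) ≤ 3 * Real.log ((1 + 2 * Real.sqrt 3) / 3) := by
    have h2 : Real.sqrt 3 ^ 2 = 3 := by rw [pow_two, h]
    have e1 : (3 - Real.sqrt 3) ^ 5 = 1188 - 684 * Real.sqrt 3 := by
      generalize Real.sqrt 3 = s at *; grind
    have e2 : ((1 + 2 * Real.sqrt 3) / 3) ^ 3 = (37 + 30 * Real.sqrt 3) / 27 := by
      generalize Real.sqrt 3 = s at *; grind
    have hb : 1.73204 < Real.sqrt 3 := by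
      rw [Real.lt_sqrt (by norm_num)]; norm_num
    have := Real.log_le_log (pow_pos (by linarith) 5)
      (show (3 - Real.sqrt 3) ^ 5 ≤ ((1 + 2 * Real.sqrt 3) / 3) ^ 3 by rw [e1, e2]; linarith)
    rw [Real.log_pow, Real.log_pow] at this
    exact_mod_cast this
  have q1 : 0 < Real.log (9 / 4) := Real.log_pos (by norm_num)
  have q2 : 0 < Real.log (3 - Real.sqrt 3) := Real.log_pos (by linarith)
  have q3 : 0 < Real.log ((1 + 2 * Real.sqrt 3) / 3) := Real.log_pos (by linarith)
  calc Real.log (11 / 3) * Real.log (3 - Real.sqrt 3)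
      ≤ (21 / 13 * Real.log (9 / 4)) * (3 / 5 * Real.log ((1 + 2 * Real.sqrt 3) / 3)) :=
        mul_le_mul (by linarith) (by linarith) q2.le (by linarith)
    _ < _ := by nlinarith [mul_pos q1 q3]

/-- **Theorem 6 (irreversibility of qutrit magic-state manipulation).**
If `D` and `C` are achievable rates for the transformations `H₊ → N` and `N → H₊`
under free (positive, trace-preserving, `F_W`-preserving) maps, then
`D ≤ log₂(3−√3)/log₂(3/2)`, `C ≤ (1/2)·log₂(11/3)/log₂((1+2√3)/3)`, and consequently
`D·C ≤ [log₂(11/3)·log₂(3−√3)]/[log₂(9/4)·log₂((1+2√3)/3)] < 1`: the resource theory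
of qutrit magic is asymptotically irreversible. -/
theorem magic_irreversibility
    (vH : Fin 3 → ℂ) (hvH : Hq.mulVec vH = vH)
    (hvHunit : ∑ j, Complex.normSq (vH j) = 1)
    (D : ℝ) (hD : 0 < D)
    (Γ : (n : ℕ) → (HMat (Fin n → Fin 3) →ₗ[ℝ] HMat (Fin ⌊D * (n : ℝ)⌋₊ → Fin 3)))
    (hΓfree : ∀ n, IsFreeMap (Γ n))
    (hΓconv : Tendsto
      (fun n : ℕ =>
        (1 / 2) * trNorm ((Γ n) (tpow (rankOne vH) n) - tpow rhoN ⌊D * (n : ℝ)⌋₊))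
      atTop (nhds 0))
    (C : ℝ) (hC : 0 < C)
    (Λ : (n : ℕ) → (HMat (Fin n → Fin 3) →ₗ[ℝ] HMat (Fin ⌊C * (n : ℝ)⌋₊ → Fin 3)))
    (hΛfree : ∀ n, IsFreeMap (Λ n))
    (hΛconv : Tendsto
      (fun n : ℕ =>
        (1 / 2) * trNorm ((Λ n) (tpow rhoN n) - tpow (rankOne vH) ⌊C * (n : ℝ)⌋₊))
      atTop (nhds 0)) :
    D ≤ Real.logb 2 (3 - Real.sqrt 3) / Real.logb 2 (3 / 2) ∧
    C ≤ (1 / 2) * Real.logb 2 (11 / 3) / Real.logb 2 ((1 + 2 * Real.sqrt 3) / 3) ∧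
    D * C ≤ (Real.logb 2 (11 / 3) * Real.logb 2 (3 - Real.sqrt 3)) /
        (Real.logb 2 (9 / 4) * Real.logb 2 ((1 + 2 * Real.sqrt 3) / 3)) ∧
    (Real.logb 2 (11 / 3) * Real.logb 2 (3 - Real.sqrt 3)) /
        (Real.logb 2 (9 / 4) * Real.logb 2 ((1 + 2 * Real.sqrt 3) / 3)) < 1 := by
  have hl := lt_s3
  have hu := s3_lt
  have hv := rankOne_vH vH hvH hvHunit
  have hDb : D * Real.log (2 / 3)⁻¹ ≤ Real.log (3 - Real.sqrt 3) := by
    refine rate_bound (by linarith) (by norm_num) (by norm_num) ?_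
    filter_upwards [eventually_half hΓconv] with n hn
    exact hn.trans (overlap_N (hΓfree n) _ hv)
  have hCb : (2 * C) * Real.log (3 * ((2 * Real.sqrt 3 - 1) / 11))⁻¹ ≤ Real.log (11 / 3) := by
    refine rate_bound (by norm_num) (by linarith) (by linarith) ?_
    have h2 : Tendsto (fun k : ℕ => 2 * k) atTop atTop :=
      tendsto_id.const_mul_atTop' (by norm_num)
    filter_upwards [h2.eventually (eventually_half hΛconv)] with k hk
    have e : C * ((2 * k : ℕ) : ℝ) = 2 * C * (k : ℝ) := by push_cast; ring
    rw [← e]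
    exact hk.trans (overlap_H (hΛfree (2 * k)) _ hv)
  rw [Q_factor, inv_inv] at hCb
  rw [show ((2 : ℝ) / 3)⁻¹ = 3 / 2 by norm_num] at hDb
  have hl2 : 0 < Real.log 2 := Real.log_pos (by norm_num)
  have q1 : 0 < Real.log (3 / 2) := Real.log_pos (by norm_num)
  have q3 : 0 < Real.log ((1 + 2 * Real.sqrt 3) / 3) := Real.log_pos (by linarith)
  have q4 : Real.log (9 / 4) = 2 * Real.log (3 / 2) := by
    rw [show (9 : ℝ) / 4 = (3 / 2) ^ 2 by norm_num, Real.log_pow]; norm_num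
  have num := numeric
  -- the base of the logarithms cancels
  have r1 : Real.logb 2 (3 - Real.sqrt 3) / Real.logb 2 (3 / 2) =
      Real.log (3 - Real.sqrt 3) / Real.log (3 / 2) := by
    simp only [Real.logb]; field_simp
  have r2 : (1 / 2) * Real.logb 2 (11 / 3) / Real.logb 2 ((1 + 2 * Real.sqrt 3) / 3) =
      Real.log (11 / 3) / (2 * Real.log ((1 + 2 * Real.sqrt 3) / 3)) := by
    simp only [Real.logb]; field_simp
  have r3 : (Real.logb 2 (11 / 3) * Real.logb 2 (3 - Real.sqrt 3)) /
        (Real.logb 2 (9 / 4) * Real.logb 2 ((1 + 2 * Real.sqrt 3) / 3)) =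
      (Real.log (11 / 3) * Real.log (3 - Real.sqrt 3)) /
        (Real.log (9 / 4) * Real.log ((1 + 2 * Real.sqrt 3) / 3)) := by
    have : Real.log (9 / 4) ≠ 0 := by rw [q4]; positivity
    simp only [Real.logb]; field_simp
  rw [r1, r2, r3]
  have b1 : D ≤ Real.log (3 - Real.sqrt 3) / Real.log (3 / 2) := by
    rw [le_div_iff₀ q1]; exact hDb
  have b2 : C ≤ Real.log (11 / 3) / (2 * Real.log ((1 + 2 * Real.sqrt 3) / 3)) := by
    rw [le_div_iff₀ (by positivity)]; linarith
  refine ⟨b1, b2, ?_, ?_⟩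
  · refine (mul_le_mul b1 b2 hC.le (hD.le.trans b1)).trans (le_of_eq ?_)
    rw [q4, div_mul_div_comm]
    congr 1 <;> ring
  · rw [div_lt_one (by rw [q4]; positivity)]
    exact num

end
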